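/- There exists a universal constant c > 0 with the following property. Let C, Γ : [0,1] → ℝ^d be continuous curves with ∫₀¹ C(t) dt = ∫₀¹ Γ(t) dt = 0, ‖C(t) − Γ(t)‖ ≤ 1/3 and ‖C(t)‖, ‖Γ(t)‖ < 1 for all t ∈ [0,1], whose first and second moments agree (∫₀¹ C(t)_j dt = ∫₀¹ Γ(t)_j dt and ∫₀¹ C(t)_j C(t)_k dt = ∫₀¹ Γ(t)_j Γ(t)_k dt for all j, k). Set Δ = ρ(C, Γ) and suppose Δ > 0 and σ ≥ 1. Then for every N ≤ c σ⁶ / Δ and every measurable function ψ : (ℝ^d)^N → {0, 1}, one has P_{C,σ}^{⊗N}(ψ = 1) + P_{Γ,σ}^{⊗N}(ψ = 0) ≥ 1/2; consequently, any test for deciding between C and Γ from N samples under a uniform prior errs with probability at least 1/4. -/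

import Mathlib

open MeasureTheory Filter Set
open scoped ENNReal
noncomputable section

/-- Density `φ_σ` of the isotropic Gaussian `N(0, σ²I_d)` on `ℝ^d`. -/
def gaussDens (d : ℕ) (σ : ℝ) (x : EuclideanSpace ℝ (Fin d)) : ℝ :=
  (2 * Real.pi * σ ^ 2) ^ (-(d : ℝ) / 2) * Real.exp (-‖x‖ ^ 2 / (2 * σ ^ 2))

/-- Density `p_{C,σ}(x) = ∫₀¹ φ_σ(x − C(t)) dt` of the noisy curve distribution, i.e. the law
of `C(τ) + σξ` with `τ` uniform on `[0,1]` and `ξ ~ N(0, I_d)` independent of `τ`. -/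
def noisyDens {d : ℕ} (C : ℝ → EuclideanSpace ℝ (Fin d)) (σ : ℝ)
    (x : EuclideanSpace ℝ (Fin d)) : ℝ :=
  ∫ t in (0:ℝ)..1, gaussDens d σ (x - C t)

/-- The noisy curve distribution `P_{C,σ}` on `ℝ^d`, defined by its density `p_{C,σ}`
with respect to Lebesgue measure. -/
def noisyMeasure {d : ℕ} (C : ℝ → EuclideanSpace ℝ (Fin d)) (σ : ℝ) :
    Measure (EuclideanSpace ℝ (Fin d)) :=
  volume.withDensity fun x => ENNReal.ofReal (noisyDens C σ x)


open scoped RealInnerProductSpace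

theorem pi_withDensity_ofReal {ι E : Type*} [Fintype ι] [MeasurableSpace E] {μ : Measure E}
    [SigmaFinite μ] {f : E → ℝ} (hf : Integrable f μ) (hf0 : ∀ x, 0 ≤ f x) :
    Measure.pi (fun _ : ι => μ.withDensity fun x => ENNReal.ofReal (f x)) =
      (Measure.pi fun _ : ι => μ).withDensity fun y => ENNReal.ofReal (∏ i, f (y i)) := by
  have : IsFiniteMeasure (μ.withDensity fun x => ENNReal.ofReal (f x)) :=
    isFiniteMeasure_withDensity_ofReal hf.2
  refine Measure.pi_eq fun s hs => ?_
  rw [withDensity_apply _ (MeasurableSet.univ_pi hs), Measure.restrict_pi_pi,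
    ← ofReal_integral_eq_lintegral_ofReal
      (Integrable.fintype_prod (f := fun _ : ι => f) fun i => hf.restrict)
      (ae_of_all _ fun y => Finset.prod_nonneg fun i _ => hf0 _),
    integral_fintype_prod_eq_prod (fun _ : ι => f),
    ENNReal.ofReal_prod_of_nonneg fun i _ => integral_nonneg hf0]
  refine Finset.prod_congr rfl fun i _ => ?_
  rw [withDensity_apply _ (hs i),
    ofReal_integral_eq_lintegral_ofReal hf.restrict (ae_of_all _ hf0)]

/-- The sum of the two error probabilities of a test, bounded below through the `χ²`-divergence. -/
theorem half_le_error_add_error {Ω : Type*} [MeasurableSpace Ω] {ν : Measure Ω} {p q : Ω → ℝ}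
    (hp : Integrable p ν) (hq : Integrable q ν) (hpq : Integrable (fun x => p x ^ 2 / q x) ν)
    (hp0 : ∀ x, 0 ≤ p x) (hq0 : ∀ x, 0 < q x) (hp1 : ∫ x, p x ∂ν = 1) (hq1 : ∫ x, q x ∂ν = 1)
    (hχ : ∫ x, p x ^ 2 / q x ∂ν ≤ 5 / 4) {A : Set Ω} (hA : MeasurableSet A) :
    (1 / 2 : ℝ≥0∞) ≤ (ν.withDensity fun x => ENNReal.ofReal (p x)) A +
      (ν.withDensity fun x => ENNReal.ofReal (q x)) Aᶜ := by
  rw [withDensity_apply _ hA, withDensity_apply _ hA.compl,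
    ← ofReal_integral_eq_lintegral_ofReal hp.restrict (ae_of_all _ hp0),
    ← ofReal_integral_eq_lintegral_ofReal hq.restrict (ae_of_all _ fun x => (hq0 x).le),
    ← ENNReal.ofReal_add (integral_nonneg hp0) (integral_nonneg fun x => (hq0 x).le),
    ← integral_indicator hA, ← integral_indicator hA.compl]
  have hpA := hp.indicator hA
  have hqA := hq.indicator hA.compl
  have hsum : Integrable (fun x => A.indicator p x + Aᶜ.indicator q x) ν := hpA.add hqA
  have hsum' : Integrable (fun x => A.indicator p x + Aᶜ.indicator q x + p x ^ 2 / q x) ν :=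
    hsum.add hpq
  have key : ∫ x, 3 * p x ∂ν ≤
      ∫ x, (A.indicator p x + Aᶜ.indicator q x + p x ^ 2 / q x + 5 / 4 * q x) ∂ν := by
    refine integral_mono (hp.const_mul 3)
      (hsum'.add (hq.const_mul (5 / 4))) fun x => ?_
    have hqx := hq0 x
    obtain ⟨r, hr⟩ : ∃ r, p x = r * q x := ⟨p x / q x, by field_simp⟩
    have hsq : p x ^ 2 / q x = r ^ 2 * q x := by rw [hr]; field_simp
    by_cases hx : x ∈ A
    · simp only [indicator_of_mem hx, indicator_of_notMem (notMem_compl_iff.2 hx), hsq]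
      rw [hr]
      nlinarith [mul_nonneg (sq_nonneg (r - 1)) hqx.le]
    · simp only [indicator_of_notMem hx, indicator_of_mem (mem_compl hx), hsq]
      rw [hr]
      nlinarith [mul_nonneg (sq_nonneg (r - 3 / 2)) hqx.le]
  rw [integral_add hsum' (hq.const_mul (5 / 4)), integral_add hsum hpq, integral_add hpA hqA,
    integral_const_mul, integral_const_mul, hp1, hq1] at key
  have h2 : (1 / 2 : ℝ≥0∞) = ENNReal.ofReal (1 / 2) := by
    rw [ENNReal.ofReal_div_of_pos two_pos]; simp
  rw [h2]
  exact ENNReal.ofReal_le_ofReal (by linarith)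

theorem half_le_pi_error_add_error {ι E : Type*} [Fintype ι] [MeasurableSpace E] {μ : Measure E}
    [SigmaFinite μ] {p q : E → ℝ}
    (hp : Integrable p μ) (hq : Integrable q μ) (hpq : Integrable (fun x => p x ^ 2 / q x) μ)
    (hp0 : ∀ x, 0 ≤ p x) (hq0 : ∀ x, 0 < q x) (hp1 : ∫ x, p x ∂μ = 1) (hq1 : ∫ x, q x ∂μ = 1)
    (hχ : (∫ x, p x ^ 2 / q x ∂μ) ^ Fintype.card ι ≤ 5 / 4)
    {A : Set (ι → E)} (hA : MeasurableSet A) :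
    (1 / 2 : ℝ≥0∞) ≤
      Measure.pi (fun _ : ι => μ.withDensity fun x => ENNReal.ofReal (p x)) A +
      Measure.pi (fun _ : ι => μ.withDensity fun x => ENNReal.ofReal (q x)) Aᶜ := by
  rw [pi_withDensity_ofReal hp hp0, pi_withDensity_ofReal hq fun x => (hq0 x).le]
  have hprod (y : ι → E) :
      (∏ i, p (y i)) ^ 2 / ∏ i, q (y i) = ∏ i, p (y i) ^ 2 / q (y i) := by
    rw [Finset.prod_div_distrib, Finset.prod_pow]
  refine half_le_error_add_error (Integrable.fintype_prod fun _ => hp)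
    (Integrable.fintype_prod fun _ => hq) ?_ (fun y => Finset.prod_nonneg fun i _ => hp0 _)
    (fun y => Finset.prod_pos fun i _ => hq0 _) ?_ ?_ ?_ hA
  · simp_rw [hprod]
    exact Integrable.fintype_prod (f := fun _ x => p x ^ 2 / q x) fun _ => hpq
  · rw [integral_fintype_prod_eq_pow, hp1, one_pow]
  · rw [integral_fintype_prod_eq_pow, hq1, one_pow]
  · simp_rw [hprod]
    rwa [integral_fintype_prod_eq_pow (fun x => p x ^ 2 / q x)]

/-- Second differences of powers. -/
theorem abs_pow_second_difference_le {a b c d r δ ε : ℝ} (hr : 0 ≤ r)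
    (hb : |b| ≤ r) (hc : |c| ≤ r) (hd : |d| ≤ r) (ha : |a| ≤ r) (hab : |a - b| ≤ r * ε)
    (hac : |a - c| ≤ r * δ) (hbd : |b - d| ≤ r * δ) (hcd : |c - d| ≤ r * ε)
    (h : |a - b - c + d| ≤ r * (δ * ε)) (hδ : 0 ≤ δ) (hε : 0 ≤ ε) (k : ℕ) :
    |a ^ k - b ^ k - c ^ k + d ^ k| ≤ k ^ 2 * (δ * ε) * r ^ k := by
  have first {x y η : ℝ} (hx : |x| ≤ r) (hy : |y| ≤ r) (hη : 0 ≤ η) (hxy : |x - y| ≤ r * η)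
      (k : ℕ) : |x ^ k - y ^ k| ≤ k * η * r ^ k := by
    induction k with
    | zero => simp
    | succ k ih =>
      have hpow : |y ^ k| ≤ r ^ k := by rw [abs_pow]; gcongr
      calc |x ^ (k + 1) - y ^ (k + 1)| = |x * (x ^ k - y ^ k) + (x - y) * y ^ k| := by ring_nf
        _ ≤ |x| * |x ^ k - y ^ k| + |x - y| * |y ^ k| := by
          rw [← abs_mul, ← abs_mul]; exact abs_add_le _ _
        _ ≤ r * (k * η * r ^ k) + (r * η) * r ^ k := by gcongr
        _ = (k + 1 : ℕ) * η * r ^ (k + 1) := by push_cast; ring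
  induction k with
  | zero => simp
  | succ k ih =>
    have hpow : |d ^ k| ≤ r ^ k := by rw [abs_pow]; gcongr
    calc |a ^ (k + 1) - b ^ (k + 1) - c ^ (k + 1) + d ^ (k + 1)|
        = |a * (a ^ k - b ^ k - c ^ k + d ^ k) + (a - b) * (b ^ k - d ^ k)
            + (a - c) * (c ^ k - d ^ k) + (a - b - c + d) * d ^ k| := by ring_nf
      _ ≤ |a| * |a ^ k - b ^ k - c ^ k + d ^ k| + |a - b| * |b ^ k - d ^ k|
            + |a - c| * |c ^ k - d ^ k| + |a - b - c + d| * |d ^ k| := by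
        simp only [← abs_mul]
        exact (abs_add_le _ _).trans (add_le_add_left (abs_add_three _ _ _) _)
      _ ≤ r * (k ^ 2 * (δ * ε) * r ^ k) + (r * ε) * (k * δ * r ^ k)
            + (r * δ) * (k * ε * r ^ k) + (r * (δ * ε)) * r ^ k := by
        gcongr
        · exact first hb hd hδ hbd k
        · exact first hc hd hε hcd k
      _ = (k + 1 : ℕ) ^ 2 * (δ * ε) * r ^ (k + 1) := by push_cast; ring

/-- The remainder of `exp` after its quadratic Taylor polynomial. -/
def expRemainder (u : ℝ) : ℝ := Real.exp u - (1 + u + u ^ 2 / 2)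

theorem hasSum_expRemainder (u : ℝ) :
    HasSum (fun k : ℕ => u ^ (k + 3) / (k + 3).factorial) (expRemainder u) := by
  have h : HasSum (fun k : ℕ => u ^ k / k.factorial) (Real.exp u) := by
    rw [Real.exp_eq_exp_ℝ]
    exact NormedSpace.expSeries_div_hasSum_exp u
  have := (hasSum_nat_add_iff' 3).2 h
  convert! this using 1
  simp [expRemainder, Finset.sum_range_succ]

theorem sq_div_factorial_le (k : ℕ) :
    ((k + 3 : ℕ) : ℝ) ^ 2 / (k + 3).factorial ≤ 3 * (1 / k.factorial) := by
  have hk : (0 : ℝ) < k.factorial := by positivity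
  rw [mul_one_div, div_le_div_iff₀ (by positivity) hk]
  have : ((k + 3).factorial : ℝ) = (k + 3) * (k + 2) * (k + 1) * k.factorial := by
    simp only [Nat.factorial_succ]; push_cast; ring
  rw [this]
  push_cast
  have h0 : (0 : ℝ) ≤ k := by positivity
  have : ((k : ℝ) + 3) ^ 2 ≤ 3 * ((k + 3) * (k + 2) * (k + 1)) := by
    nlinarith [mul_nonneg h0 h0, mul_nonneg (mul_nonneg h0 h0) h0]
  nlinarith

theorem abs_expRemainder_second_difference_le {a b c d r δ ε : ℝ} (hr : 0 ≤ r) (hr1 : r ≤ 1)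
    (hb : |b| ≤ r) (hc : |c| ≤ r) (hd : |d| ≤ r) (ha : |a| ≤ r) (hab : |a - b| ≤ r * ε)
    (hac : |a - c| ≤ r * δ) (hbd : |b - d| ≤ r * δ) (hcd : |c - d| ≤ r * ε)
    (h : |a - b - c + d| ≤ r * (δ * ε)) (hδ : 0 ≤ δ) (hε : 0 ≤ ε) :
    |expRemainder a - expRemainder b - expRemainder c + expRemainder d| ≤
      3 * Real.exp 1 * (δ * ε) * r ^ 3 := by
  have hsum := (((hasSum_expRemainder a).sub (hasSum_expRemainder b)).sub
    (hasSum_expRemainder c)).add (hasSum_expRemainder d)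
  have hexp : HasSum (fun k : ℕ => 3 * (δ * ε) * r ^ 3 * (1 / (k.factorial : ℝ)))
      (3 * (δ * ε) * r ^ 3 * Real.exp 1) := by
    refine HasSum.mul_left _ ?_
    rw [Real.exp_eq_exp_ℝ]
    simpa using NormedSpace.expSeries_div_hasSum_exp (1 : ℝ)
  rw [← hsum.tsum_eq, ← Real.norm_eq_abs]
  refine (tsum_of_norm_bounded hexp fun k => ?_).trans_eq (by ring)
  rw [← sub_div, ← sub_div, ← add_div, norm_div, Real.norm_eq_abs, Real.norm_natCast]
  have hk := abs_pow_second_difference_le hr hb hc hd ha hab hac hbd hcd h hδ hε (k + 3)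
  have hrk : r ^ (k + 3) ≤ r ^ 3 := pow_le_pow_of_le_one hr hr1 (by omega)
  calc _ ≤ ((k + 3 : ℕ) : ℝ) ^ 2 * (δ * ε) * r ^ (k + 3) / (k + 3).factorial := by gcongr
    _ ≤ ((k + 3 : ℕ) : ℝ) ^ 2 * (δ * ε) * r ^ 3 / (k + 3).factorial := by gcongr
    _ = ((k + 3 : ℕ) : ℝ) ^ 2 / (k + 3).factorial * ((δ * ε) * r ^ 3) := by ring
    _ ≤ 3 * (1 / k.factorial) * ((δ * ε) * r ^ 3) := by
      gcongr
      exact sq_div_factorial_le k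
    _ = _ := by ring

theorem gaussDens_pos (d : ℕ) {σ : ℝ} (hσ : 0 < σ) (x : EuclideanSpace ℝ (Fin d)) :
    0 < gaussDens d σ x := by
  unfold gaussDens
  positivity

@[fun_prop]
theorem continuous_gaussDens (d : ℕ) (σ : ℝ) : Continuous (gaussDens d σ) := by
  unfold gaussDens
  fun_prop

theorem gaussDens_le (d : ℕ) {σ : ℝ} (x : EuclideanSpace ℝ (Fin d)) :
    gaussDens d σ x ≤ gaussDens d σ 0 := by
  unfold gaussDens
  gcongr ?_ * Real.exp ?_
  simp only [norm_zero]
  gcongr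
  positivity

theorem integral_gaussDens (d : ℕ) {σ : ℝ} (hσ : 0 < σ) : ∫ x, gaussDens d σ x = 1 := by
  have h := GaussianFourier.integral_rexp_neg_mul_sq_norm (V := EuclideanSpace ℝ (Fin d))
    (b := 1 / (2 * σ ^ 2)) (by positivity)
  have hexp : ∀ x : EuclideanSpace ℝ (Fin d),
      -‖x‖ ^ 2 / (2 * σ ^ 2) = -(1 / (2 * σ ^ 2)) * ‖x‖ ^ 2 := fun x => by ring
  simp only [gaussDens, hexp]
  rw [integral_const_mul, h, finrank_euclideanSpace_fin,
    show Real.pi / (1 / (2 * σ ^ 2)) = 2 * Real.pi * σ ^ 2 by field_simp,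
    ← Real.rpow_add (by positivity)]
  simp [neg_div]

theorem integrable_gaussDens (d : ℕ) {σ : ℝ} (hσ : 0 < σ) : Integrable (gaussDens d σ) :=
  Integrable.of_integral_ne_zero (by rw [integral_gaussDens d hσ]; exact one_ne_zero)

theorem gaussDens_sub_mul_div (d : ℕ) {σ : ℝ} (hσ : 0 < σ) (x a b : EuclideanSpace ℝ (Fin d)) :
    gaussDens d σ (x - a) * gaussDens d σ (x - b) / gaussDens d σ x =
      Real.exp (⟪a, b⟫ / σ ^ 2) * gaussDens d σ (x - (a + b)) := by
  rw [div_eq_iff (gaussDens_pos d hσ x).ne']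
  simp only [gaussDens]
  have hexp : Real.exp (-‖x - a‖ ^ 2 / (2 * σ ^ 2)) * Real.exp (-‖x - b‖ ^ 2 / (2 * σ ^ 2)) =
      Real.exp (⟪a, b⟫ / σ ^ 2) * Real.exp (-‖x - (a + b)‖ ^ 2 / (2 * σ ^ 2)) *
        Real.exp (-‖x‖ ^ 2 / (2 * σ ^ 2)) := by
    simp only [← Real.exp_add]
    congr 1
    simp only [norm_sub_sq_real, norm_add_sq_real, inner_add_right]
    field_simp
    ring
  linear_combination ((2 * Real.pi * σ ^ 2) ^ (-(d : ℝ) / 2)) ^ 2 * hexp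

section Mixture

variable {T : Type*} [MeasurableSpace T] (μ : Measure T) {d : ℕ}

/-- The density of `X + σξ`, with `X` a random vector on `(T, μ)` and `ξ` a standard Gaussian
vector independent of `X`. -/
def mixDens (X : T → EuclideanSpace ℝ (Fin d)) (σ : ℝ) (x : EuclideanSpace ℝ (Fin d)) : ℝ :=
  ∫ t, gaussDens d σ (x - X t) ∂μ

variable {X Y : T → EuclideanSpace ℝ (Fin d)} {σ : ℝ}

theorem mixDens_nonneg (hσ : 0 < σ) (x : EuclideanSpace ℝ (Fin d)) : 0 ≤ mixDens μ X σ x :=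
  integral_nonneg fun _ => (gaussDens_pos d hσ _).le

variable [IsProbabilityMeasure μ]

theorem abs_inner_div_sq_le {E : Type*} [NormedAddCommGroup E] [InnerProductSpace ℝ E] {x y : E}
    {δ ε σ : ℝ} (hx : ‖x‖ ≤ δ) (hy : ‖y‖ ≤ ε) :
    |⟪x, y⟫ / σ ^ 2| ≤ 1 / σ ^ 2 * (δ * ε) := by
  rw [abs_div, abs_of_nonneg (sq_nonneg σ), div_eq_inv_mul, one_div]
  gcongr
  exact (abs_real_inner_le_norm x y).trans (by gcongr; exact (norm_nonneg x).trans hx)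

theorem integrable_continuous_inner {g : ℝ → ℝ} (hg : Continuous g) (hX : Measurable X)
    (hY : Measurable Y) (hX1 : ∀ t, ‖X t‖ ≤ 1) (hY1 : ∀ t, ‖Y t‖ ≤ 1) :
    Integrable (fun z : T × T => g (⟪X z.1, Y z.2⟫ / σ ^ 2)) (μ.prod μ) := by
  obtain ⟨M, hM⟩ := (isCompact_Icc (a := -(1 / σ ^ 2)) (b := 1 / σ ^ 2))
    |>.exists_bound_of_continuousOn hg.continuousOn
  refine Integrable.of_bound (hg.measurable.comp (by fun_prop)).aestronglyMeasurable M
    (ae_of_all _ fun z => hM _ ?_)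
  simpa [abs_le] using abs_inner_div_sq_le (σ := σ) (hX1 z.1) (hY1 z.2)

theorem mixDens_pairing (hσ : 0 < σ) (hX : Measurable X)
    (hY : Measurable Y) (hX1 : ∀ t, ‖X t‖ ≤ 1) (hY1 : ∀ t, ‖Y t‖ ≤ 1) :
    Integrable (fun x => mixDens μ X σ x * mixDens μ Y σ x / gaussDens d σ x) ∧
      ∫ x, mixDens μ X σ x * mixDens μ Y σ x / gaussDens d σ x =
        ∫ z, Real.exp (⟪X z.1, Y z.2⟫ / σ ^ 2) ∂(μ.prod μ) := by
  let F (x : EuclideanSpace ℝ (Fin d)) (z : T × T) : ℝ :=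
    Real.exp (⟪X z.1, Y z.2⟫ / σ ^ 2) * gaussDens d σ (x - (X z.1 + Y z.2))
  have hF (x) : mixDens μ X σ x * mixDens μ Y σ x / gaussDens d σ x = ∫ z, F x z ∂(μ.prod μ) := by
    simp only [F, mixDens, ← gaussDens_sub_mul_div d hσ]
    rw [integral_div, integral_prod_mul (fun t => gaussDens d σ (x - X t))
      fun t => gaussDens d σ (x - Y t)]
  have hF1 (z : T × T) : ∫ x, F x z = Real.exp (⟪X z.1, Y z.2⟫ / σ ^ 2) := by
    simp only [F]
    rw [integral_const_mul, integral_sub_right_eq_self (gaussDens d σ), integral_gaussDens d hσ,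
      mul_one]
  have hmeas : Measurable (Function.uncurry F) := by
    simp only [F, Function.uncurry_def]
    have := (continuous_gaussDens d σ).measurable
    refine Measurable.mul (by fun_prop) (this.comp (by fun_prop))
  have hint : Integrable (Function.uncurry F) (volume.prod (μ.prod μ)) := by
    rw [integrable_prod_iff' hmeas.aestronglyMeasurable]
    refine ⟨ae_of_all _ fun z => ((integrable_gaussDens d hσ).comp_sub_right
      (X z.1 + Y z.2)).const_mul (Real.exp (⟪X z.1, Y z.2⟫ / σ ^ 2)), ?_⟩
    have hnorm (z : T × T) : ∫ x, ‖Function.uncurry F (x, z)‖ =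
        Real.exp (⟪X z.1, Y z.2⟫ / σ ^ 2) := by
      rw [← hF1 z]
      refine integral_congr_ae (ae_of_all _ fun x => Real.norm_of_nonneg ?_)
      exact mul_nonneg (Real.exp_pos _).le (gaussDens_pos d hσ _).le
    simp only [hnorm]
    exact integrable_continuous_inner μ Real.continuous_exp hX hY hX1 hY1
  simp only [hF]
  refine ⟨hint.integral_prod_left, ?_⟩
  rw [integral_integral_swap hint]
  simp only [hF1]

theorem mixDens_zero (x : EuclideanSpace ℝ (Fin d)) :
    mixDens μ (fun _ => 0) σ x = gaussDens d σ x := by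
  simp [mixDens]

theorem integrable_mixDens (hσ : 0 < σ) (hX : Measurable X) (hX1 : ∀ t, ‖X t‖ ≤ 1) :
    Integrable (mixDens μ X σ) := by
  have h := (mixDens_pairing μ hσ hX (measurable_const (a := 0)) hX1 (by simp)).1
  simpa [mixDens_zero, (gaussDens_pos d hσ _).ne'] using h

theorem integral_mixDens (hσ : 0 < σ) (hX : Measurable X) (hX1 : ∀ t, ‖X t‖ ≤ 1) :
    ∫ x, mixDens μ X σ x = 1 := by
  have h := (mixDens_pairing μ hσ hX (measurable_const (a := 0)) hX1 (by simp)).2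
  simpa [mixDens_zero, (gaussDens_pos d hσ _).ne'] using h

theorem integrable_of_norm_le_one (hX : Measurable X) (hX1 : ∀ t, ‖X t‖ ≤ 1) :
    Integrable X μ :=
  Integrable.of_bound hX.aestronglyMeasurable 1 (ae_of_all _ hX1)

theorem half_gaussDens_le_mixDens (hσ : 1 ≤ σ) (hX : Measurable X) (hX1 : ∀ t, ‖X t‖ ≤ 1)
    (hX0 : ∫ t, X t ∂μ = 0) (x : EuclideanSpace ℝ (Fin d)) :
    gaussDens d σ x / 2 ≤ mixDens μ X σ x := by
  have hσ0 : 0 < σ := by linarith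
  have hXint := integrable_of_norm_le_one μ hX hX1
  have hpt (t : T) : gaussDens d σ x * (1 / 2 + 1 / 2 * (⟪x, X t⟫ / σ ^ 2)) ≤
      gaussDens d σ (x - X t) := by
    have hsplit : gaussDens d σ (x - X t) = gaussDens d σ x *
        (Real.exp (-‖X t‖ ^ 2 / (2 * σ ^ 2)) * Real.exp (⟪x, X t⟫ / σ ^ 2)) := by
      simp only [gaussDens]
      rw [← Real.exp_add, mul_assoc ((2 * Real.pi * σ ^ 2) ^ (-(d : ℝ) / 2)), ← Real.exp_add,
        norm_sub_sq_real]
      congr 2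
      field_simp
      ring
    have hX2 : ‖X t‖ ^ 2 / (2 * σ ^ 2) ≤ 1 / 2 := by
      have h1 : ‖X t‖ ^ 2 ≤ 1 := pow_le_one₀ (norm_nonneg _) (hX1 t)
      have h2 : 1 ≤ σ ^ 2 := one_le_pow₀ hσ
      rw [div_le_div_iff₀ (by positivity) two_pos]
      linarith
    have hexp : 1 / 2 ≤ Real.exp (-‖X t‖ ^ 2 / (2 * σ ^ 2)) := by
      have := Real.add_one_le_exp (-‖X t‖ ^ 2 / (2 * σ ^ 2))
      rw [neg_div] at this ⊢
      linarith
    rw [hsplit]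
    refine mul_le_mul_of_nonneg_left ?_ (gaussDens_pos d hσ0 x).le
    calc 1 / 2 + 1 / 2 * (⟪x, X t⟫ / σ ^ 2) = 1 / 2 * (⟪x, X t⟫ / σ ^ 2 + 1) := by ring
      _ ≤ 1 / 2 * Real.exp (⟪x, X t⟫ / σ ^ 2) := by gcongr; exact Real.add_one_le_exp _
      _ ≤ _ := by gcongr
  have hinner : Integrable (fun t => ⟪x, X t⟫ / σ ^ 2) μ := (hXint.const_inner x).div_const _
  have hlin : Integrable (fun t => 1 / 2 * (⟪x, X t⟫ / σ ^ 2)) μ := hinner.const_mul _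
  have hinner0 : ∫ t, ⟪x, X t⟫ / σ ^ 2 ∂μ = 0 := by
    rw [integral_div, integral_inner hXint, hX0, inner_zero_right, zero_div]
  have hlhs : ∫ t, gaussDens d σ x * (1 / 2 + 1 / 2 * (⟪x, X t⟫ / σ ^ 2)) ∂μ =
      gaussDens d σ x / 2 := by
    rw [integral_const_mul, integral_add (integrable_const _) hlin, integral_const_mul,
      hinner0]
    simp [div_eq_mul_inv]
  rw [← hlhs]
  refine integral_mono (((integrable_const _).add hlin).const_mul _) ?_ hpt
  refine Integrable.of_bound
    ((continuous_gaussDens d σ).measurable.comp (by fun_prop)).aestronglyMeasurable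
    (gaussDens d σ 0) (ae_of_all _ fun t => ?_)
  rw [Real.norm_of_nonneg (gaussDens_pos d hσ0 _).le]
  exact gaussDens_le d _

theorem integral_inner_sq (hX : Measurable X) (hY : Measurable Y) (hX1 : ∀ t, ‖X t‖ ≤ 1)
    (hY1 : ∀ t, ‖Y t‖ ≤ 1) :
    ∫ z, ⟪X z.1, Y z.2⟫ ^ 2 ∂(μ.prod μ) =
      ∑ j, ∑ k, (∫ t, X t j * X t k ∂μ) * ∫ t, Y t j * Y t k ∂μ := by
  have hint {Z : T → EuclideanSpace ℝ (Fin d)} (hZ : Measurable Z) (hZ1 : ∀ t, ‖Z t‖ ≤ 1)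
      (j k : Fin d) : Integrable (fun t => Z t j * Z t k) μ := by
    refine Integrable.of_bound (by fun_prop) (1 * 1) (ae_of_all _ fun t => ?_)
    rw [norm_mul]
    exact mul_le_mul ((PiLp.norm_apply_le _ j).trans (hZ1 t))
      ((PiLp.norm_apply_le _ k).trans (hZ1 t)) (norm_nonneg _) zero_le_one
  have hexpand (z : T × T) : ⟪X z.1, Y z.2⟫ ^ 2 =
      ∑ j, ∑ k, (X z.1 j * X z.1 k) * (Y z.2 j * Y z.2 k) := by
    rw [sq, PiLp.inner_apply, Finset.sum_mul_sum]
    refine Finset.sum_congr rfl fun j _ => Finset.sum_congr rfl fun k _ => ?_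
    simp only [RCLike.inner_apply, conj_trivial]
    ring
  have hmul (j k : Fin d) : Integrable
      (fun z : T × T => (X z.1 j * X z.1 k) * (Y z.2 j * Y z.2 k)) (μ.prod μ) :=
    (hint hX hX1 j k).mul_prod (hint hY hY1 j k)
  simp only [hexpand]
  rw [integral_finsetSum _ fun j _ => integrable_finsetSum _ fun k _ => hmul j k]
  refine Finset.sum_congr rfl fun j _ => ?_
  rw [integral_finsetSum _ fun k _ => hmul j k]
  refine Finset.sum_congr rfl fun k _ => ?_
  exact integral_prod_mul (fun t => X t j * X t k) fun t => Y t j * Y t k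

@[fun_prop]
theorem continuous_expRemainder : Continuous expRemainder := by
  unfold expRemainder
  fun_prop

theorem integral_exp_inner (hX : Measurable X) (hY : Measurable Y) (hX1 : ∀ t, ‖X t‖ ≤ 1)
    (hY1 : ∀ t, ‖Y t‖ ≤ 1) (hY0 : ∫ t, Y t ∂μ = 0) :
    ∫ z, Real.exp (⟪X z.1, Y z.2⟫ / σ ^ 2) ∂(μ.prod μ) =
      1 + (∑ j, ∑ k, (∫ t, X t j * X t k ∂μ) * ∫ t, Y t j * Y t k ∂μ) / (2 * σ ^ 4) +
      ∫ z, expRemainder (⟪X z.1, Y z.2⟫ / σ ^ 2) ∂(μ.prod μ) := by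
  have hint {g : ℝ → ℝ} (hg : Continuous g) :=
    integrable_continuous_inner (σ := σ) μ hg hX hY hX1 hY1
  have hsplit (z : T × T) : Real.exp (⟪X z.1, Y z.2⟫ / σ ^ 2) =
      (1 + ⟪X z.1, Y z.2⟫ / σ ^ 2 + (⟪X z.1, Y z.2⟫ / σ ^ 2) ^ 2 / 2) +
        expRemainder (⟪X z.1, Y z.2⟫ / σ ^ 2) := by
    simp [expRemainder]
  have hlin : ∫ z, ⟪X z.1, Y z.2⟫ / σ ^ 2 ∂(μ.prod μ) = 0 := by
    rw [integral_prod _ (hint (g := fun u => u) continuous_id)]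
    simp only [integral_div, integral_inner (integrable_of_norm_le_one μ hY hY1), hY0,
      inner_zero_right, zero_div, integral_zero]
  have hquad : ∫ z, (⟪X z.1, Y z.2⟫ / σ ^ 2) ^ 2 / 2 ∂(μ.prod μ) =
      (∑ j, ∑ k, (∫ t, X t j * X t k ∂μ) * ∫ t, Y t j * Y t k ∂μ) / (2 * σ ^ 4) := by
    rw [← integral_inner_sq μ hX hY hX1 hY1, ← integral_div]
    refine integral_congr_ae (ae_of_all _ fun z => ?_)
    simp only [div_pow, div_div]
    ring
  simp only [hsplit]
  rw [integral_add (hint (g := fun u => 1 + u + u ^ 2 / 2) (by fun_prop))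
      (hint continuous_expRemainder),
    integral_add (hint (g := fun u => 1 + u) (by fun_prop))
      (hint (g := fun u => u ^ 2 / 2) (by fun_prop)),
    integral_add (integrable_const _) (hint (g := fun u => u) continuous_id), hlin, hquad]
  simp

theorem integrable_second_difference {α : Type*} [MeasurableSpace α] {ν : Measure α}
    {f g h k : α → ℝ} (hf : Integrable f ν) (hg : Integrable g ν) (hh : Integrable h ν)
    (hk : Integrable k ν) : Integrable (fun x => f x - g x - h x + k x) ν :=
  ((hf.sub hg).sub hh).add hk

theorem integral_second_difference {α : Type*} [MeasurableSpace α] {ν : Measure α}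
    {f g h k : α → ℝ} (hf : Integrable f ν) (hg : Integrable g ν) (hh : Integrable h ν)
    (hk : Integrable k ν) : ∫ x, (f x - g x - h x + k x) ∂ν =
      ∫ x, f x ∂ν - ∫ x, g x ∂ν - ∫ x, h x ∂ν + ∫ x, k x ∂ν := by
  have hfg : Integrable (fun x => f x - g x) ν := hf.sub hg
  have hfgh : Integrable (fun x => f x - g x - h x) ν := hfg.sub hh
  rw [integral_add hfgh hk, integral_sub hfg hh, integral_sub hf hg]

theorem integral_sq_sub_mixDens_le (hσ : 1 ≤ σ) (hX : Measurable X) (hY : Measurable Y)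
    (hX1 : ∀ t, ‖X t‖ ≤ 1) (hY1 : ∀ t, ‖Y t‖ ≤ 1)
    (hX0 : ∫ t, X t ∂μ = 0) (hY0 : ∫ t, Y t ∂μ = 0)
    (hXY : ∀ j k, ∫ t, X t j * X t k ∂μ = ∫ t, Y t j * Y t k ∂μ) :
    Integrable (fun x => (mixDens μ X σ x - mixDens μ Y σ x) ^ 2 / gaussDens d σ x) ∧
      ∫ x, (mixDens μ X σ x - mixDens μ Y σ x) ^ 2 / gaussDens d σ x ≤
        3 * Real.exp 1 * (∫ t, ‖X t - Y t‖ ^ 2 ∂μ) / σ ^ 6 := by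
  have hσ0 : 0 < σ := by linarith
  obtain ⟨iXX, eXX⟩ := mixDens_pairing μ hσ0 hX hX hX1 hX1
  obtain ⟨iXY, eXY⟩ := mixDens_pairing μ hσ0 hX hY hX1 hY1
  obtain ⟨iYX, eYX⟩ := mixDens_pairing μ hσ0 hY hX hY1 hX1
  obtain ⟨iYY, eYY⟩ := mixDens_pairing μ hσ0 hY hY hY1 hY1
  have hexpand (x) : (mixDens μ X σ x - mixDens μ Y σ x) ^ 2 / gaussDens d σ x =
      mixDens μ X σ x * mixDens μ X σ x / gaussDens d σ x -
      mixDens μ X σ x * mixDens μ Y σ x / gaussDens d σ x -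
      mixDens μ Y σ x * mixDens μ X σ x / gaussDens d σ x +
      mixDens μ Y σ x * mixDens μ Y σ x / gaussDens d σ x := by ring
  simp only [hexpand]
  refine ⟨integrable_second_difference iXX iXY iYX iYY, ?_⟩
  rw [integral_second_difference iXX iXY iYX iYY, eXX, eXY, eYX, eYY,
    integral_exp_inner μ hX hX hX1 hX1 hX0,
    integral_exp_inner μ hX hY hX1 hY1 hY0, integral_exp_inner μ hY hX hY1 hX1 hX0,
    integral_exp_inner μ hY hY hY1 hY1 hY0]
  simp only [hXY]
  have rXX := integrable_continuous_inner (σ := σ) μ continuous_expRemainder hX hX hX1 hX1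
  have rXY := integrable_continuous_inner (σ := σ) μ continuous_expRemainder hX hY hX1 hY1
  have rYX := integrable_continuous_inner (σ := σ) μ continuous_expRemainder hY hX hY1 hX1
  have rYY := integrable_continuous_inner (σ := σ) μ continuous_expRemainder hY hY hY1 hY1
  have hδ : Integrable (fun t => ‖X t - Y t‖ ^ 2) μ := by
    refine Integrable.of_bound (by fun_prop) ((1 + 1) ^ 2) (ae_of_all _ fun t => ?_)
    rw [Real.norm_of_nonneg (by positivity)]
    gcongr
    exact (norm_sub_le _ _).trans (add_le_add (hX1 t) (hY1 t))
  have hδ1 : Integrable (fun z : T × T => ‖X z.1 - Y z.1‖ ^ 2) (μ.prod μ) := hδ.comp_fst μ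
  have hδ2 : Integrable (fun z : T × T => ‖X z.2 - Y z.2‖ ^ 2) (μ.prod μ) := hδ.comp_snd μ
  have hpt (z : T × T) :
      expRemainder (⟪X z.1, X z.2⟫ / σ ^ 2) - expRemainder (⟪X z.1, Y z.2⟫ / σ ^ 2) -
        expRemainder (⟪Y z.1, X z.2⟫ / σ ^ 2) + expRemainder (⟪Y z.1, Y z.2⟫ / σ ^ 2) ≤
      3 * Real.exp 1 / (2 * σ ^ 6) * (‖X z.1 - Y z.1‖ ^ 2 + ‖X z.2 - Y z.2‖ ^ 2) := by
    have hr1 : 1 / σ ^ 2 ≤ 1 := by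
      rw [div_le_one (by positivity)]
      exact one_le_pow₀ hσ
    have hb {x y : EuclideanSpace ℝ (Fin d)} (hx : ‖x‖ ≤ 1) (hy : ‖y‖ ≤ 1) :
        |⟪x, y⟫ / σ ^ 2| ≤ 1 / σ ^ 2 := by
      simpa using abs_inner_div_sq_le (σ := σ) hx hy
    have hl {x y y' : EuclideanSpace ℝ (Fin d)} (hx : ‖x‖ ≤ 1) :
        |⟪x, y⟫ / σ ^ 2 - ⟪x, y'⟫ / σ ^ 2| ≤ 1 / σ ^ 2 * ‖y - y'‖ := by
      rw [← sub_div, ← inner_sub_right]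
      simpa using abs_inner_div_sq_le (σ := σ) hx (le_refl ‖y - y'‖)
    have hl' {x x' y : EuclideanSpace ℝ (Fin d)} (hy : ‖y‖ ≤ 1) :
        |⟪x, y⟫ / σ ^ 2 - ⟪x', y⟫ / σ ^ 2| ≤ 1 / σ ^ 2 * ‖x - x'‖ := by
      rw [← sub_div, ← inner_sub_left]
      simpa using abs_inner_div_sq_le (σ := σ) (le_refl ‖x - x'‖) hy
    have hll : |⟪X z.1, X z.2⟫ / σ ^ 2 - ⟪X z.1, Y z.2⟫ / σ ^ 2 - ⟪Y z.1, X z.2⟫ / σ ^ 2 +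
        ⟪Y z.1, Y z.2⟫ / σ ^ 2| ≤ 1 / σ ^ 2 * (‖X z.1 - Y z.1‖ * ‖X z.2 - Y z.2‖) := by
      convert abs_inner_div_sq_le (σ := σ) (le_refl ‖X z.1 - Y z.1‖)
        (le_refl ‖X z.2 - Y z.2‖) using 2
      simp only [inner_sub_left, inner_sub_right]
      ring
    refine (le_abs_self _).trans ((abs_expRemainder_second_difference_le (by positivity) hr1
      (hb (hX1 _) (hY1 _)) (hb (hY1 _) (hX1 _)) (hb (hY1 _) (hY1 _)) (hb (hX1 _) (hX1 _))
      (hl (hX1 _)) (hl' (hX1 _)) (hl' (hY1 _)) (hl (hY1 _)) hll (norm_nonneg _)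
      (norm_nonneg _)).trans ?_)
    have hamgm := two_mul_le_add_sq ‖X z.1 - Y z.1‖ ‖X z.2 - Y z.2‖
    calc 3 * Real.exp 1 * (‖X z.1 - Y z.1‖ * ‖X z.2 - Y z.2‖) * (1 / σ ^ 2) ^ 3
        = 3 * Real.exp 1 / (2 * σ ^ 6) * (2 * ‖X z.1 - Y z.1‖ * ‖X z.2 - Y z.2‖) := by
          field_simp
      _ ≤ _ := by gcongr
  have hmono := integral_mono (integrable_second_difference rXX rXY rYX rYY)
    ((hδ1.add hδ2).const_mul (3 * Real.exp 1 / (2 * σ ^ 6))) hpt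
  rw [integral_second_difference rXX rXY rYX rYY, integral_const_mul, integral_add' hδ1 hδ2,
    integral_fun_fst (fun t => ‖X t - Y t‖ ^ 2), integral_fun_snd (fun t => ‖X t - Y t‖ ^ 2)]
    at hmono
  simp only [probReal_univ, one_smul] at hmono
  refine (le_of_eq ?_).trans (hmono.trans_eq ?_)
  · ring
  · field_simp
    ring

theorem integral_sq_div_mixDens_le (hσ : 1 ≤ σ) (hX : Measurable X) (hY : Measurable Y)
    (hX1 : ∀ t, ‖X t‖ ≤ 1) (hY1 : ∀ t, ‖Y t‖ ≤ 1)
    (hX0 : ∫ t, X t ∂μ = 0) (hY0 : ∫ t, Y t ∂μ = 0)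
    (hXY : ∀ j k, ∫ t, X t j * X t k ∂μ = ∫ t, Y t j * Y t k ∂μ) :
    Integrable (fun x => mixDens μ X σ x ^ 2 / mixDens μ Y σ x) ∧
      ∫ x, mixDens μ X σ x ^ 2 / mixDens μ Y σ x ≤
        1 + 6 * Real.exp 1 * (∫ t, ‖X t - Y t‖ ^ 2 ∂μ) / σ ^ 6 := by
  have hσ0 : 0 < σ := by linarith
  obtain ⟨hint, hle⟩ := integral_sq_sub_mixDens_le μ hσ hX hY hX1 hY1 hX0 hY0 hXY
  have hp := integrable_mixDens μ hσ0 hX hX1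
  have hq := integrable_mixDens μ hσ0 hY hY1
  have hpt (x) : mixDens μ X σ x ^ 2 / mixDens μ Y σ x ≤ 2 * mixDens μ X σ x - mixDens μ Y σ x +
      2 * ((mixDens μ X σ x - mixDens μ Y σ x) ^ 2 / gaussDens d σ x) := by
    have hg := gaussDens_pos d hσ0 x
    have hgq := half_gaussDens_le_mixDens μ hσ hY hY1 hY0 x
    have hqpos : 0 < mixDens μ Y σ x := by linarith
    calc mixDens μ X σ x ^ 2 / mixDens μ Y σ x = 2 * mixDens μ X σ x - mixDens μ Y σ x +
          (mixDens μ X σ x - mixDens μ Y σ x) ^ 2 / mixDens μ Y σ x := by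
          field_simp
          ring
      _ ≤ 2 * mixDens μ X σ x - mixDens μ Y σ x +
          (mixDens μ X σ x - mixDens μ Y σ x) ^ 2 / (gaussDens d σ x / 2) := by gcongr
      _ = _ := by ring
  have hsub : Integrable (fun x => 2 * mixDens μ X σ x - mixDens μ Y σ x) :=
    (hp.const_mul 2).sub hq
  have hdom := hsub.add (hint.const_mul 2)
  have hratio : Integrable (fun x => mixDens μ X σ x ^ 2 / mixDens μ Y σ x) := by
    refine hdom.mono' ((hp.aemeasurable.pow_const 2).div hq.aemeasurable).aestronglyMeasurable
      (ae_of_all _ fun x => ?_)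
    rw [Real.norm_of_nonneg (div_nonneg (sq_nonneg _) (mixDens_nonneg μ hσ0 x))]
    exact hpt x
  refine ⟨hratio, (integral_mono hratio hdom hpt).trans ?_⟩
  rw [integral_add' hsub (hint.const_mul 2), integral_sub (hp.const_mul 2) hq,
    integral_const_mul, integral_const_mul, integral_mixDens μ hσ0 hX hX1,
    integral_mixDens μ hσ0 hY hY1]
  calc _ ≤ (2 * 1 - 1 : ℝ) + 2 * (3 * Real.exp 1 * (∫ t, ‖X t - Y t‖ ^ 2 ∂μ) / σ ^ 6) := by
        gcongr
    _ = _ := by ring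

end Mixture

theorem intervalIntegral_eq_integral_unitInterval {E : Type*} [NormedAddCommGroup E]
    [NormedSpace ℝ E] (f : ℝ → E) : ∫ t in (0:ℝ)..1, f t = ∫ t : unitInterval, f t := by
  rw [intervalIntegral.integral_of_le zero_le_one, ← integral_Icc_eq_integral_Ioc]
  exact (integral_subtype measurableSet_Icc f).symm

theorem one_add_pow_le_five_fourths {x : ℝ} {N : ℕ} (hx : 0 ≤ x) (hN : N * x ≤ 1 / 5) :
    (1 + x) ^ N ≤ 5 / 4 := by
  have hexp : Real.exp (1 / 5) ≤ 5 / 4 := by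
    have h := Real.add_one_le_exp (-(1 / 5) : ℝ)
    rw [Real.exp_neg, ← one_div, le_div_iff₀ (Real.exp_pos _)] at h
    linarith
  calc (1 + x) ^ N ≤ Real.exp x ^ N := by
        gcongr
        linarith [Real.add_one_le_exp x]
    _ = Real.exp (N * x) := (Real.exp_nat_mul x N).symm
    _ ≤ Real.exp (1 / 5) := Real.exp_le_exp.2 hN
    _ ≤ 5 / 4 := hexp

/-- There is a universal constant `c > 0` such that for mean-zero curves
`C, Γ` (bounded by 1, uniformly `1/3`-close) whose first and second moments agree, with
`Δ = ρ(C,Γ) > 0` and `σ ≥ 1`: for every `N ≤ c σ⁶/Δ` and every measurable test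
`ψ : (ℝ^d)^N → {0,1}`, `P_{C,σ}^{⊗N}(ψ = 1) + P_{Γ,σ}^{⊗N}(ψ = 0) ≥ 1/2`. -/
theorem sample_complexity_lower_bound :
    ∃ c : ℝ, 0 < c ∧
      ∀ (d : ℕ) (C Γ : ℝ → EuclideanSpace ℝ (Fin d)),
        Continuous C → Continuous Γ →
        (∫ t in (0:ℝ)..1, C t) = 0 → (∫ t in (0:ℝ)..1, Γ t) = 0 →
        (∀ t ∈ Set.Icc (0:ℝ) 1, ‖C t - Γ t‖ ≤ 1 / 3) →
        (∀ t ∈ Set.Icc (0:ℝ) 1, ‖C t‖ < 1) →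
        (∀ t ∈ Set.Icc (0:ℝ) 1, ‖Γ t‖ < 1) →
        (∀ j : Fin d, (∫ t in (0:ℝ)..1, C t j) = ∫ t in (0:ℝ)..1, Γ t j) →
        (∀ j k : Fin d,
          (∫ t in (0:ℝ)..1, C t j * C t k) = ∫ t in (0:ℝ)..1, Γ t j * Γ t k) →
        ∀ Δ : ℝ, Δ = (∫ t in (0:ℝ)..1, ‖C t - Γ t‖ ^ 2) → 0 < Δ →
        ∀ σ : ℝ, 1 ≤ σ →
        ∀ N : ℕ, (N : ℝ) ≤ c * σ ^ 6 / Δ →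
        ∀ ψ : (Fin N → EuclideanSpace ℝ (Fin d)) → Bool, Measurable ψ →
          (1 / 2 : ℝ≥0∞) ≤
            Measure.pi (fun _ : Fin N => noisyMeasure C σ) {y | ψ y = true}
              + Measure.pi (fun _ : Fin N => noisyMeasure Γ σ) {y | ψ y = false} := by
  refine ⟨1 / (30 * Real.exp 1), by positivity, ?_⟩
  intro d C Γ hC hΓ hC0 hΓ0 _ hC1 hΓ1 _ hCΓ Δ hΔ hΔ0 σ hσ N hN ψ hψ
  have hσ0 : 0 < σ := by linarith
  let X : unitInterval → EuclideanSpace ℝ (Fin d) := fun t => C t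
  let Y : unitInterval → EuclideanSpace ℝ (Fin d) := fun t => Γ t
  have hX : Measurable X := (hC.comp continuous_subtype_val).measurable
  have hY : Measurable Y := (hΓ.comp continuous_subtype_val).measurable
  have hX1 (t) : ‖X t‖ ≤ 1 := (hC1 t t.2).le
  have hY1 (t) : ‖Y t‖ ≤ 1 := (hΓ1 t t.2).le
  simp only [intervalIntegral_eq_integral_unitInterval] at hC0 hΓ0 hCΓ hΔ
  have hp : noisyDens C σ = mixDens volume X σ :=
    funext fun x => intervalIntegral_eq_integral_unitInterval _
  have hq : noisyDens Γ σ = mixDens volume Y σ :=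
    funext fun x => intervalIntegral_eq_integral_unitInterval _
  obtain ⟨hint, hle⟩ := integral_sq_div_mixDens_le volume hσ hX hY hX1 hY1 hC0 hΓ0 hCΓ
  have hpow : (∫ x, mixDens volume X σ x ^ 2 / mixDens volume Y σ x) ^ Fintype.card (Fin N) ≤
      5 / 4 := by
    rw [Fintype.card_fin]
    refine (pow_le_pow_left₀ (integral_nonneg fun x => div_nonneg (sq_nonneg _)
      (mixDens_nonneg volume hσ0 x)) hle N).trans (one_add_pow_le_five_fourths (by positivity) ?_)
    rw [← hΔ]
    calc (N : ℝ) * (6 * Real.exp 1 * Δ / σ ^ 6)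
        ≤ 1 / (30 * Real.exp 1) * σ ^ 6 / Δ * (6 * Real.exp 1 * Δ / σ ^ 6) := by gcongr
      _ = 1 / 5 := by
        field_simp
        norm_num
  have hA : MeasurableSet {y | ψ y = true} := hψ (measurableSet_singleton true)
  have hcompl : {y | ψ y = false} = {y | ψ y = true}ᶜ := by
    ext y
    simp
  rw [hcompl]
  simp only [noisyMeasure, hp, hq]
  exact half_le_pi_error_add_error (integrable_mixDens volume hσ0 hX hX1)
    (integrable_mixDens volume hσ0 hY hY1) hint (mixDens_nonneg volume hσ0)
    (fun x => (half_pos (gaussDens_pos d hσ0 x)).trans_le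
      (half_gaussDens_le_mixDens volume hσ hY hY1 hΓ0 x))
    (integral_mixDens volume hσ0 hX hX1) (integral_mixDens volume hσ0 hY hY1) hpow hA
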